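/- Let m ≡ 0 (mod 4), and let e be an integer with 2 ≤ e ≤ ⌊m/2⌋ and gcd(m,e) = 2. Then the supports of the codewords of Hamming weight 6 in the extended code C̄_E form a 2-(2^m, 6, λ) design with λ = (2^{2m−3} + 2^m + 12)/3: every 2-element subset of the 2^m coordinate positions is contained in the support of exactly (2^{2m−3} + 2^m + 12)/3 codewords of Hamming weight 6 of C̄_E. -/

import Mathlib

open Polynomial Finset

/-- The polynomial `c₀ + c₁x + ⋯ + c_{n−1}x^{n−1}` associated to a vector. -/
noncomputable def codePoly {n : ℕ} (c : Fin n → ZMod 2) : Polynomial (ZMod 2) :=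
  ∑ i : Fin n, Polynomial.C (c i) * Polynomial.X ^ (i : ℕ)

/-- The generator polynomial `g_E(x) = M_α(x) · M_{α^{1+2^e}}(x)`. -/
noncomputable def gE (m e : ℕ) (α : GaloisField 2 m) : Polynomial (ZMod 2) :=
  minpoly (ZMod 2) α * minpoly (ZMod 2) (α ^ (1 + 2 ^ e))

/-- The binary cyclic code `C_E` of length `2^m − 1` with generator polynomial `g_E`. -/
def CE (m e : ℕ) (α : GaloisField 2 m) : Set (Fin (2 ^ m - 1) → ZMod 2) :=
  {c | gE m e α ∣ codePoly c}

/-- The extended code `C̄_E ⊆ F_2^{2^m}`: the first `2^m − 1` coordinates form a codeword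
of `C_E` and all `2^m` coordinates sum to zero. -/
def CEbar (m e : ℕ) (α : GaloisField 2 m) : Set (Fin (2 ^ m) → ZMod 2) :=
  {c | (fun i : Fin (2 ^ m - 1) => c (Fin.castLE (Nat.sub_le _ _) i)) ∈ CE m e α ∧
       ∑ i, c i = 0}

/-!
Label the coordinates by the elements of `F = GF(2 ^ m)` and put `σ x = x ^ 2 ^ e`. A weight-six
codeword is a six-element set `S ⊆ F` with `∑ t = ∑ t * σ t = 0`. Both conditions survive affine
substitutions because `6` is even, so it suffices to count the sets through `0` and `1`. Such a set
is `{0, 1, v + 1, v + w, v + w + u, u + v}`, where `1, w, u, v` are linearly independent over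
`GF(2)`, and its last condition reads `B(1, v) = B(w, u)` for the alternating form
`B(x, y) = x * σ y + σ x * y`; each set arises from `4 * 3 * 2 = 24` triples `(w, u, v)`.
Without the independence condition the solutions are counted for fixed `u`: shifting `v` by
`w * σ u` makes the equation `v + σ v = σ w * (u + σ (σ u))`. The dependent triples are then
subtracted. Only the numbers of fixed points of `σ` and `σ ∘ σ`, which are `2 ^ gcd(m, e)` and
`2 ^ gcd(m, 2 * e)`, enter the result.
-/

section PolarForm

/-- The polarization `f (x + y) - f x - f y` of `f x = x * σ x`, as a biadditive map. -/
def polarForm {F : Type*} [CommSemiring F] (σ : F →+* F) : F →+ F →+ F :=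
  AddMonoidHom.mul.compl₂ (σ : F →+ F) + AddMonoidHom.mul.comp (σ : F →+ F)

theorem polarForm_apply {F : Type*} [CommSemiring F] (σ : F →+* F) (x y : F) :
    polarForm σ x y = x * σ y + σ x * y :=
  rfl

variable {F : Type*} [Field F] [Fintype F] [DecidableEq F] [CharP F 2] (σ : F →+* F)

theorem card_polarForm_eq_zero {w : F} (hw : w ≠ 0) :
    #{u | polarForm σ w u = 0} = #{t | σ t = t} := by
  symm
  refine card_bij (fun t _ => w * t) ?_ (fun t _ t' _ h => mul_left_cancel₀ hw h) ?_
  · intro t ht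
    rw [mem_filter_univ] at ht ⊢
    rw [polarForm_apply, map_mul, ht]
    grind
  · intro u hu
    rw [mem_filter_univ, polarForm_apply] at hu
    have hσw : σ w ≠ 0 := by simpa using hw
    refine ⟨u / w, ?_, mul_div_cancel₀ u hw⟩
    rw [mem_filter_univ, map_div₀, div_eq_div_iff hσw hw]
    grind

theorem card_polarForm_one_eq {b v₀ : F} (hv₀ : polarForm σ 1 v₀ = b) :
    #{v | polarForm σ 1 v = b} = #{t | σ t = t} := by
  rw [← card_polarForm_eq_zero σ one_ne_zero]
  exact AddMonoidHom.card_fiber_eq_of_mem_range _ ⟨v₀, hv₀⟩ ⟨0, map_zero _⟩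

-- Substituting `v + w * σ u` for `v` turns the equation into `v + σ v = σ w * (u + σ (σ u))`.
theorem card_polarForm_one_eq_polarForm_right (u : F) :
    #{p : F × F | polarForm σ 1 p.2 = polarForm σ p.1 u} =
      if σ (σ u) = u then Fintype.card F * #{t | σ t = t} else Fintype.card F := by
  have shift : #{p : F × F | polarForm σ 1 p.2 = polarForm σ p.1 u} =
      #{p : F × F | polarForm σ 1 p.2 = σ p.1 * (u + σ (σ u))} := by
    refine card_equiv
      (Equiv.ofBijective (fun p : F × F => (p.1, p.2 + p.1 * σ u)) <|
        Function.Involutive.bijective fun p => Prod.ext rfl (by grind)) fun p => ?_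
    simp only [mem_filter_univ, Equiv.ofBijective_apply, polarForm_apply, map_one,
      map_add, map_mul]
    grind
  rw [shift]
  split_ifs with hu
  · rw [← card_polarForm_eq_zero σ one_ne_zero, ← card_univ, ← card_product]
    congr 1
    ext p
    simp only [mem_filter_univ, mem_product, mem_univ, true_and, hu, CharTwo.add_self_eq_zero,
      mul_zero]
  · have hk : u + σ (σ u) ≠ 0 := by grind
    obtain ⟨-, hsurj⟩ : Function.Bijective σ := Finite.injective_iff_bijective.mp σ.injective
    rw [← card_univ]
    refine card_bij (fun p _ => p.2) (fun _ _ => mem_univ _) ?_ fun v _ => ?_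
    · rintro ⟨w, v⟩ hw ⟨w', v'⟩ hw' rfl
      simp only [mem_filter_univ] at hw hw'
      rw [σ.injective (mul_right_cancel₀ hk (hw.symm.trans hw'))]
    · obtain ⟨w, hw⟩ := hsurj (polarForm σ 1 v / (u + σ (σ u)))
      exact ⟨(w, v), by simp [hw, div_mul_cancel₀ _ hk], rfl⟩

theorem card_polarForm_one_eq_polarForm :
    (#{p : (F × F) × F | polarForm σ 1 p.2 = polarForm σ p.1.1 p.1.2} : ℤ) =
      Fintype.card F ^ 2 + #{t | σ (σ t) = t} * (#{t | σ t = t} - 1) * Fintype.card F := by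
  have fiberwise : #{p : (F × F) × F | polarForm σ 1 p.2 = polarForm σ p.1.1 p.1.2} =
      ∑ u, #{p : F × F | polarForm σ 1 p.2 = polarForm σ p.1 u} := by
    simp only [card_filter, Fintype.sum_prod_type_right]
    exact sum_comm
  have hcompl := card_filter_add_card_filter_not (s := (univ : Finset F)) fun u => σ (σ u) = u
  rw [fiberwise]
  simp only [card_polarForm_one_eq_polarForm_right, sum_ite, sum_const, smul_eq_mul]
  rw [card_univ] at hcompl
  rw [← hcompl]
  push_cast
  ring

end PolarForm

section Independence

/-- Linear independence of `1`, `w`, `u` over the prime field `{0, 1}` of a field of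
characteristic two. -/
def IndepOne {F : Type*} [Ring F] (w u : F) : Prop :=
  (w ≠ 0 ∧ w ≠ 1) ∧ u ≠ 0 ∧ u ≠ 1 ∧ u ≠ w ∧ u ≠ w + 1

instance {F : Type*} [Ring F] [DecidableEq F] (w u : F) : Decidable (IndepOne w u) :=
  inferInstanceAs (Decidable (_ ∧ _))

/-- The span of `1`, `w`, `u` over the prime field `{0, 1}` of a field of characteristic two. -/
def spanOne {F : Type*} [Ring F] [DecidableEq F] (w u : F) : Finset F :=
  (({0, 1} : Finset F) ×ˢ {0, 1} ×ˢ {0, 1}).image fun c => c.1 + c.2.1 * w + c.2.2 * u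

variable {F : Type*} [Field F] [DecidableEq F] [CharP F 2]

theorem IndepOne.add_coeffs {w u i j : F} (h : IndepOne w u) (hi : i ∈ ({0, 1} : Finset F))
    (hj : j ∈ ({0, 1} : Finset F)) : IndepOne (w + i) (u + j) := by
  simp only [mem_insert, mem_singleton] at hi hj
  unfold IndepOne at h ⊢
  grind

theorem IndepOne.coeffs_eq_zero {w u i j k : F} (h : IndepOne w u)
    (hi : i ∈ ({0, 1} : Finset F)) (hj : j ∈ ({0, 1} : Finset F)) (hk : k ∈ ({0, 1} : Finset F))
    (hijk : i + j * w + k * u = 0) : i = 0 ∧ j = 0 ∧ k = 0 := by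
  simp only [mem_insert, mem_singleton] at hi hj hk
  unfold IndepOne at h
  grind

theorem add_mem_zero_one {i j : F} (hi : i ∈ ({0, 1} : Finset F)) (hj : j ∈ ({0, 1} : Finset F)) :
    i + j ∈ ({0, 1} : Finset F) := by
  simp only [mem_insert, mem_singleton] at hi hj ⊢
  grind

theorem IndepOne.coeffs_unique {w u i j k i' j' k' : F} (h : IndepOne w u)
    (hi : i ∈ ({0, 1} : Finset F)) (hj : j ∈ ({0, 1} : Finset F)) (hk : k ∈ ({0, 1} : Finset F))
    (hi' : i' ∈ ({0, 1} : Finset F)) (hj' : j' ∈ ({0, 1} : Finset F))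
    (hk' : k' ∈ ({0, 1} : Finset F)) (heq : i + j * w + k * u = i' + j' * w + k' * u) :
    i = i' ∧ j = j' ∧ k = k' := by
  simpa only [CharTwo.add_eq_zero] using h.coeffs_eq_zero (add_mem_zero_one hi hi')
    (add_mem_zero_one hj hj') (add_mem_zero_one hk hk') (by grind)

theorem card_span_one_pair {w : F} (hw : w ≠ 0 ∧ w ≠ 1) : #({0, 1, w, w + 1} : Finset F) = 4 := by
  have hnodup : [0, 1, w, w + 1].Nodup := by
    simp only [List.nodup_cons, List.mem_cons, List.not_mem_nil]
    grind
  simpa using List.toFinset_card_of_nodup hnodup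

theorem card_polarForm_eq_zero_span_one_pair (σ : F →+* F) {w : F} (hw : w ≠ 0 ∧ w ≠ 1) :
    #{u ∈ ({0, 1, w, w + 1} : Finset F) | polarForm σ w u = 0} = if σ w = w then 4 else 2 := by
  have h₁ : polarForm σ w 1 = 0 ↔ σ w = w := by rw [polarForm_apply]; grind
  have hself : polarForm σ w w = 0 := by rw [polarForm_apply]; grind
  rw [filter_insert, filter_insert, filter_insert, filter_singleton]
  simp only [map_zero, map_add, hself, zero_add, h₁, if_true]
  split_ifs
  · exact card_span_one_pair hw
  · exact card_pair hw.1.symm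

end Independence

section IndependenceCount

variable {F : Type*} [Field F] [Fintype F] [DecidableEq F]

theorem card_ne_zero_one_and {P : F → Prop} [DecidablePred P] (h₀ : P 0) (h₁ : P 1) :
    #{w | (w ≠ 0 ∧ w ≠ 1) ∧ P w} + 2 = #{w | P w} := by
  have hdiff : ({w | (w ≠ 0 ∧ w ≠ 1) ∧ P w} : Finset F) = ({w | P w} : Finset F) \ {0, 1} := by
    grind
  have hsub : ({0, 1} : Finset F) ⊆ ({w | P w} : Finset F) := by grind
  rw [hdiff, ← card_pair (zero_ne_one' F), card_sdiff_add_card_eq_card hsub]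

theorem card_indepOne_and_add {w : F} (hw : w ≠ 0 ∧ w ≠ 1) (P : F → Prop) [DecidablePred P] :
    #{u | IndepOne w u ∧ P u} + #{u ∈ ({0, 1, w, w + 1} : Finset F) | P u} = #{u | P u} := by
  have hdiff : ({u | IndepOne w u ∧ P u} : Finset F) =
      ({u | P u} : Finset F) \ {u ∈ ({0, 1, w, w + 1} : Finset F) | P u} := by
    ext u
    simp only [mem_sdiff, mem_filter, mem_univ, true_and, mem_insert, mem_singleton]
    unfold IndepOne
    tauto
  rw [hdiff, card_sdiff_add_card_eq_card (filter_subset_filter P (subset_univ _))]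

theorem card_indepOne_and_eq_sum (P : F → F → Prop) [∀ w u, Decidable (P w u)] :
    #{p : F × F | IndepOne p.1 p.2 ∧ P p.1 p.2} =
      ∑ w with w ≠ 0 ∧ w ≠ 1, #{u | IndepOne w u ∧ P w u} := by
  simp only [card_filter, Fintype.sum_prod_type, sum_filter]
  refine sum_congr rfl fun w _ => ?_
  split_ifs with hw
  · rfl
  · exact sum_eq_zero fun u _ => if_neg fun h => hw h.1.1

variable [CharP F 2]

theorem card_indepOne :
    (#{p : F × F | IndepOne p.1 p.2} : ℤ) = (Fintype.card F - 2) * (Fintype.card F - 4) := by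
  have hfiber (w : F) (hw : w ≠ 0 ∧ w ≠ 1) : (#{u | IndepOne w u} : ℤ) = Fintype.card F - 4 := by
    have := card_indepOne_and_add hw fun _ => True
    simp only [and_true, filter_true, card_span_one_pair hw, card_univ] at this
    lia
  have hcard := card_ne_zero_one_and (F := F) (P := fun _ => True) trivial trivial
  have hsum := card_indepOne_and_eq_sum (F := F) fun _ _ => True
  simp only [and_true, filter_true, card_univ] at hcard hsum
  rw [hsum, Nat.cast_sum, sum_congr rfl fun w h => hfiber w ((mem_filter_univ w).1 h), sum_const,
    ← hcard, nsmul_eq_mul]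
  push_cast
  ring

theorem card_indepOne_polarForm_eq_zero (σ : F →+* F) :
    (#{p : F × F | IndepOne p.1 p.2 ∧ polarForm σ p.1 p.2 = 0} : ℤ) =
      (#{t | σ t = t} - 2) * (Fintype.card F - 4) := by
  have hfiber (w : F) (hw : w ≠ 0 ∧ w ≠ 1) : (#{u | IndepOne w u ∧ polarForm σ w u = 0} : ℤ) =
      #{t | σ t = t} - 2 - if σ w = w then 2 else 0 := by
    have := card_indepOne_and_add hw (polarForm σ w · = 0)
    rw [card_polarForm_eq_zero σ hw.1, card_polarForm_eq_zero_span_one_pair σ hw] at this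
    split_ifs at this ⊢ <;> lia
  have hcard := card_ne_zero_one_and (F := F) (P := fun _ => True) trivial trivial
  have hfix := card_ne_zero_one_and (P := (fun w => σ w = w)) (map_zero σ) (map_one σ)
  simp only [and_true, filter_true, card_univ] at hcard
  rw [card_indepOne_and_eq_sum (polarForm σ · · = 0), Nat.cast_sum,
    sum_congr rfl fun w h => hfiber w ((mem_filter_univ w).1 h), sum_sub_distrib, sum_const,
    ← sum_filter, filter_filter, sum_const, ← hcard, ← hfix, nsmul_eq_mul, nsmul_eq_mul]
  push_cast
  ring

end IndependenceCount

section IndependentTriples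

variable {F : Type*} [Field F] [CharP F 2] (σ : F →+* F)

theorem exists_polarForm_one_eq_of_not_indepOne {w u : F} (h : ¬IndepOne w u) :
    ∃ v, polarForm σ 1 v = polarForm σ w u := by
  have hdep : w = 0 ∨ w = 1 ∨ u = 0 ∨ u = 1 ∨ u = w ∨ u = w + 1 := by
    unfold IndepOne at h
    tauto
  simp only [polarForm_apply, map_one]
  rcases hdep with rfl | rfl | rfl | rfl | rfl | rfl
  · exact ⟨0, by simp⟩
  · exact ⟨u, by simp⟩
  · exact ⟨0, by simp⟩
  · exact ⟨w, by simp [add_comm]⟩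
  · exact ⟨0, by grind⟩
  · exact ⟨w, by grind⟩

variable [DecidableEq F]

theorem polarForm_one_comb {w u i j k : F} (hi : i ∈ ({0, 1} : Finset F))
    (hj : j ∈ ({0, 1} : Finset F)) (hk : k ∈ ({0, 1} : Finset F)) :
    polarForm σ 1 (i + j * w + k * u) = polarForm σ w u ↔ polarForm σ (w + k) (u + j) = 0 := by
  have hfix : ∀ {x : F}, x ∈ ({0, 1} : Finset F) → σ x = x := by
    simp only [mem_insert, mem_singleton]
    rintro x (rfl | rfl) <;> simp
  rw [polarForm_apply, polarForm_apply, polarForm_apply]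
  simp only [map_add, map_mul, map_one, hfix hi, hfix hj, hfix hk]
  clear hfix
  simp only [mem_insert, mem_singleton] at hi hj hk
  grind

variable [Fintype F]

theorem card_not_indepOne_polarForm :
    #{p : (F × F) × F |
      ¬IndepOne p.1.1 p.1.2 ∧ polarForm σ 1 p.2 = polarForm σ p.1.1 p.1.2} =
      #{p : F × F | ¬IndepOne p.1 p.2} * #{t | σ t = t} := by
  rw [card_eq_sum_card_fiberwise (f := Prod.fst) (t := {p : F × F | ¬IndepOne p.1 p.2})
    fun p hp => by simpa using ((mem_filter_univ p).1 hp).1, sum_const_nat]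
  rintro ⟨w, u⟩ h
  rw [mem_filter_univ] at h
  obtain ⟨v₀, hv₀⟩ := exists_polarForm_one_eq_of_not_indepOne σ h
  rw [← card_polarForm_one_eq σ hv₀, filter_filter]
  symm
  refine card_bij (fun v _ => ((w, u), v)) ?_ ?_ ?_
  · intro v hv
    simp only [mem_filter_univ] at hv ⊢
    exact ⟨⟨h, hv⟩, trivial⟩
  · exact fun _ _ _ _ => congrArg Prod.snd
  · rintro ⟨_, v⟩ hv
    simp only [mem_filter_univ] at hv
    obtain ⟨⟨-, hv⟩, rfl⟩ := hv
    exact ⟨v, by simpa using hv, rfl⟩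

-- For `v = i + j * w + k * u` the equation says that the independent pair `(w + k, u + j)` is
-- isotropic.
theorem card_mem_spanOne_polarForm :
    #{p : (F × F) × F | (IndepOne p.1.1 p.1.2 ∧ p.2 ∈ spanOne p.1.1 p.1.2) ∧
      polarForm σ 1 p.2 = polarForm σ p.1.1 p.1.2} =
      8 * #{p : F × F | IndepOne p.1 p.2 ∧ polarForm σ p.1 p.2 = 0} := by
  have hbits : #(({0, 1} : Finset F) ×ˢ ({0, 1} : Finset F) ×ˢ ({0, 1} : Finset F)) = 8 := by
    simp only [card_product, card_pair (zero_ne_one' F)]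
  rw [← hbits, ← card_product]
  symm
  refine card_bij (fun c _ => ((c.2.1 + c.1.2.2, c.2.2 + c.1.2.1),
    c.1.1 + c.1.2.1 * (c.2.1 + c.1.2.2) + c.1.2.2 * (c.2.2 + c.1.2.1))) ?_ ?_ ?_
  · rintro ⟨⟨i, j, k⟩, w, u⟩ h
    simp only [mem_product, mem_filter_univ] at h ⊢
    obtain ⟨⟨hi, hj, hk⟩, hind, hB⟩ := h
    refine ⟨⟨hind.add_coeffs hk hj, mem_image.2 ⟨(i, j, k), ?_, rfl⟩⟩,
      (polarForm_one_comb σ hi hj hk).2 ?_⟩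
    · simp only [mem_product, hi, hj, hk, true_and]
    · simpa only [add_assoc, CharTwo.add_self_eq_zero, add_zero] using hB
  · rintro ⟨⟨i, j, k⟩, w, u⟩ h ⟨⟨i', j', k'⟩, w', u'⟩ h' heq
    simp only [mem_product, mem_filter_univ, Prod.mk.injEq] at h h' heq
    obtain ⟨⟨hi, hj, hk⟩, hind, -⟩ := h
    obtain ⟨⟨hi', hj', hk'⟩, -⟩ := h'
    obtain ⟨⟨hw, hu⟩, hv⟩ := heq
    rw [← hw, ← hu] at hv
    obtain ⟨rfl, rfl, rfl⟩ := (hind.add_coeffs hk hj).coeffs_unique hi hj hk hi' hj' hk' hv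
    rw [add_right_cancel hw, add_right_cancel hu]
  · rintro ⟨⟨w, u⟩, v⟩ h
    simp only [mem_filter_univ, spanOne, mem_image, mem_product] at h
    obtain ⟨⟨hind, ⟨i, j, k⟩, ⟨hi, hj, hk⟩, rfl⟩, hB⟩ := h
    refine ⟨((i, j, k), (w + k, u + j)), ?_, ?_⟩
    · simp only [mem_product, mem_filter_univ]
      exact ⟨⟨hi, hj, hk⟩, hind.add_coeffs hk hj, (polarForm_one_comb σ hi hj hk).1 hB⟩
    · simp only [add_assoc, CharTwo.add_self_eq_zero, add_zero]

theorem card_notMem_spanOne_polarForm :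
    (#{p : (F × F) × F | (IndepOne p.1.1 p.1.2 ∧ p.2 ∉ spanOne p.1.1 p.1.2) ∧
      polarForm σ 1 p.2 = polarForm σ p.1.1 p.1.2} : ℤ) =
      Fintype.card F ^ 2 + #{t | σ (σ t) = t} * (#{t | σ t = t} - 1) * Fintype.card F -
        #{t | σ t = t} * (6 * Fintype.card F - 8) -
        8 * (#{t | σ t = t} - 2) * (Fintype.card F - 4) := by
  have hsplit : #{p : (F × F) × F | polarForm σ 1 p.2 = polarForm σ p.1.1 p.1.2} =
      #{p : (F × F) × F | (IndepOne p.1.1 p.1.2 ∧ p.2 ∉ spanOne p.1.1 p.1.2) ∧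
        polarForm σ 1 p.2 = polarForm σ p.1.1 p.1.2} +
      #{p : (F × F) × F | (IndepOne p.1.1 p.1.2 ∧ p.2 ∈ spanOne p.1.1 p.1.2) ∧
        polarForm σ 1 p.2 = polarForm σ p.1.1 p.1.2} +
      #{p : (F × F) × F |
        ¬IndepOne p.1.1 p.1.2 ∧ polarForm σ 1 p.2 = polarForm σ p.1.1 p.1.2} := by
    rw [← card_union_of_disjoint, ← card_union_of_disjoint]
    · congr 1
      grind
    all_goals
      rw [disjoint_left]
      grind
  have htotal := card_polarForm_one_eq_polarForm σ
  have hspan := card_indepOne_polarForm_eq_zero σ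
  have hpairs := card_filter_add_card_filter_not (s := (univ : Finset (F × F)))
    fun p => IndepOne p.1 p.2
  rw [card_univ, Fintype.card_prod] at hpairs
  have hdep : (#{p : F × F | ¬IndepOne p.1 p.2} : ℤ) = 6 * Fintype.card F - 8 := by
    zify at hpairs
    linear_combination hpairs - card_indepOne (F := F)
  rw [hsplit, card_mem_spanOne_polarForm, card_not_indepOne_polarForm] at htotal
  push_cast [hspan, hdep] at htotal
  linear_combination htotal

end IndependentTriples

section SixPointBlocks

/-- The six points of a zero-sum set through `0` and `1` in a ring of characteristic two, the first
listed being the sum of the other five. -/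
def sixPoints {F : Type*} [Ring F] (a b c : F) : List F :=
  [1 + a + b + c, 0, 1, a, b, c]

/-- The six-element sets through `x` and `y` on which both `t` and `t * σ t` sum to zero. -/
def blocks {F : Type*} [Field F] [Fintype F] [DecidableEq F] (σ : F →+* F) (x y : F) :
    Finset (Finset F) :=
  {S | (#S = 6 ∧ ∑ t ∈ S, t = 0 ∧ ∑ t ∈ S, t * σ t = 0) ∧ x ∈ S ∧ y ∈ S}

theorem mem_blocks {F : Type*} [Field F] [Fintype F] [DecidableEq F] {σ : F →+* F} {x y : F}
    {S : Finset F} : S ∈ blocks σ x y ↔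
      (#S = 6 ∧ ∑ t ∈ S, t = 0 ∧ ∑ t ∈ S, t * σ t = 0) ∧ x ∈ S ∧ y ∈ S :=
  mem_filter_univ S

theorem card_distinct_triples {F : Type*} [DecidableEq F] (R : Finset F) :
    #{p ∈ (R ×ˢ R) ×ˢ R | p.1.1 ≠ p.1.2 ∧ p.2 ≠ p.1.1 ∧ p.2 ≠ p.1.2} =
      #R * (#R - 1) * (#R - 2) := by
  have hpairs : #{q ∈ R ×ˢ R | q.1 ≠ q.2} = #R * (#R - 1) := by
    rw [show ({q ∈ R ×ˢ R | q.1 ≠ q.2} : Finset (F × F)) = R.offDiag by grind, offDiag_card,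
      Nat.mul_sub_one]
  rw [← hpairs, card_eq_sum_card_fiberwise (f := Prod.fst) (t := {q ∈ R ×ˢ R | q.1 ≠ q.2})
    fun p hp => by simp at hp ⊢; tauto]
  refine sum_const_nat ?_
  rintro ⟨a, b⟩ h
  simp only [mem_filter, mem_product] at h
  obtain ⟨⟨ha, hb⟩, hab⟩ := h
  rw [← card_pair hab, ← card_sdiff_of_subset (by grind)]
  symm
  refine card_bij (fun c _ => ((a, b), c)) ?_ ?_ ?_
  · simp; grind
  · exact fun _ _ _ _ => congrArg Prod.snd
  · simp; grind

variable {F : Type*} [Field F] [DecidableEq F]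

theorem sum_sixPoints {a b c : F} (f : F → F) (h : (sixPoints a b c).Nodup) :
    ∑ t ∈ (sixPoints a b c).toFinset, f t =
      f 0 + f 1 + f a + f b + f c + f (1 + a + b + c) := by
  rw [List.sum_toFinset f h]
  simp only [sixPoints, List.map_cons, List.map_nil, List.sum_cons, List.sum_nil]
  ring

variable [CharP F 2]

theorem eq_insert_sum_of_sum_eq_zero {S T : Finset F} (hTS : T ⊆ S) (hcard : #S = #T + 1)
    (hS : ∑ x ∈ S, x = 0) : ∑ x ∈ T, x ∉ T ∧ S = insert (∑ x ∈ T, x) T := by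
  obtain ⟨d, hd⟩ := card_eq_one.1 (by rw [card_sdiff_of_subset hTS]; lia : #(S \ T) = 1)
  have hdT : d ∈ S \ T := hd ▸ mem_singleton_self d
  have hsum := sum_sdiff hTS (f := id)
  simp only [hd, sum_singleton, id_eq, hS, CharTwo.add_eq_zero] at hsum
  rw [← hsum, insert_eq, ← hd, sdiff_union_of_subset hTS]
  exact ⟨(mem_sdiff.1 hdT).2, rfl⟩

theorem nodup_sixPoints_iff {w u v : F} :
    (sixPoints (w + v) (u + w + v) (v + 1)).Nodup ↔ IndepOne w u ∧ v ∉ spanOne w u := by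
  have hspan : v ∈ spanOne w u ↔ v = 0 ∨ v = u ∨ v = w ∨ v = w + u ∨
      v = 1 ∨ v = 1 + u ∨ v = 1 + w ∨ v = 1 + w + u := by
    simp only [spanOne, mem_image, Prod.exists, mem_product, mem_insert, mem_singleton, and_assoc,
      or_and_right, exists_or, exists_eq_left, exists_and_left, zero_mul, one_mul, zero_add,
      add_zero, or_assoc, eq_comm (b := v)]
  rw [hspan]
  unfold IndepOne
  simp only [sixPoints, List.nodup_cons, List.mem_cons, List.not_mem_nil, List.nodup_nil]
  grind (splits := 20)

variable (σ : F →+* F)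

theorem sum_sixPoints_mul_eq_zero_iff {w u v : F}
    (h : (sixPoints (w + v) (u + w + v) (v + 1)).Nodup) :
    ∑ t ∈ (sixPoints (w + v) (u + w + v) (v + 1)).toFinset, t * σ t = 0 ↔
      polarForm σ 1 v = polarForm σ w u := by
  rw [sum_sixPoints _ h]
  rw [polarForm_apply, polarForm_apply]
  simp only [map_add, map_one, map_zero]
  grind

theorem card_sixPoints_sum_mul_eq_zero [Fintype F] :
    (#{p : (F × F) × F | (sixPoints p.1.1 p.1.2 p.2).Nodup ∧
      ∑ t ∈ (sixPoints p.1.1 p.1.2 p.2).toFinset, t * σ t = 0} : ℤ) =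
      Fintype.card F ^ 2 + #{t | σ (σ t) = t} * (#{t | σ t = t} - 1) * Fintype.card F -
        #{t | σ t = t} * (6 * Fintype.card F - 8) -
        8 * (#{t | σ t = t} - 2) * (Fintype.card F - 4) := by
  rw [← card_notMem_spanOne_polarForm σ, Nat.cast_inj]
  symm
  let toPoints : (F × F) × F ≃ (F × F) × F :=
    { toFun p := ((p.1.1 + p.2, p.1.2 + p.1.1 + p.2), p.2 + 1)
      invFun p := ((p.1.1 + p.2 + 1, p.1.1 + p.1.2), p.2 + 1)
      left_inv p := by ext <;> dsimp only <;> grind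
      right_inv p := by ext <;> dsimp only <;> grind }
  refine card_equiv toPoints ?_
  rintro ⟨⟨w, u⟩, v⟩
  simp only [mem_filter_univ, toPoints, Equiv.coe_fn_mk]
  rw [← nodup_sixPoints_iff]
  exact and_congr_right fun h => (sum_sixPoints_mul_eq_zero_iff σ h).symm

theorem nodup_sixPoints_and_toFinset_eq_iff {S : Finset F} (hcard : #S = 6) (h₀ : 0 ∈ S)
    (h₁ : 1 ∈ S) (hsum : ∑ t ∈ S, t = 0) {a b c : F} :
    (sixPoints a b c).Nodup ∧ (sixPoints a b c).toFinset = S ↔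
      ((a ∈ S \ {0, 1} ∧ b ∈ S \ {0, 1}) ∧ c ∈ S \ {0, 1}) ∧ a ≠ b ∧ c ≠ a ∧ c ≠ b := by
  constructor
  · rintro ⟨hnodup, rfl⟩
    simp only [sixPoints, List.nodup_cons, List.mem_cons, List.not_mem_nil] at hnodup
    simp only [sixPoints, mem_sdiff, List.mem_toFinset, List.mem_cons, mem_insert, mem_singleton]
    grind
  · rintro ⟨hmem, hne⟩
    have hnodup : [0, 1, a, b, c].Nodup := by
      simp only [List.nodup_cons, List.mem_cons, List.not_mem_nil]
      grind
    have hsub : [0, 1, a, b, c].toFinset ⊆ S := by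
      intro t ht
      simp only [List.mem_toFinset, List.mem_cons, List.not_mem_nil] at ht
      grind
    have hlast := eq_insert_sum_of_sum_eq_zero hsub
      (by rw [hcard, List.toFinset_card_of_nodup hnodup]; rfl) hsum
    rw [List.sum_toFinset _ hnodup] at hlast
    simp only [List.map_cons, List.map_nil, List.sum_cons, List.sum_nil, add_zero, zero_add,
      List.mem_toFinset, ← add_assoc] at hlast
    obtain ⟨hnotMem, rfl⟩ := hlast
    exact ⟨List.nodup_cons.2 ⟨hnotMem, hnodup⟩, List.toFinset_cons⟩

theorem sum_sixPoints_eq_zero {a b c : F} (h : (sixPoints a b c).Nodup) :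
    ∑ t ∈ (sixPoints a b c).toFinset, t = 0 := by
  rw [sum_sixPoints _ h]
  grind

theorem card_sixPoints_eq_card_blocks [Fintype F] :
    #{p : (F × F) × F | (sixPoints p.1.1 p.1.2 p.2).Nodup ∧
      ∑ t ∈ (sixPoints p.1.1 p.1.2 p.2).toFinset, t * σ t = 0} = #(blocks σ 0 1) * 24 := by
  rw [card_eq_sum_card_fiberwise (f := fun p => (sixPoints p.1.1 p.1.2 p.2).toFinset)
    (t := blocks σ 0 1)]
  · refine sum_const_nat fun S hS => ?_
    rw [mem_blocks] at hS
    obtain ⟨⟨hcard, hsum, hsum'⟩, h₀, h₁⟩ := hS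
    have hR : #(S \ {0, 1}) = 4 := by
      rw [card_sdiff_of_subset (by grind), hcard, card_pair zero_ne_one]
    have htriples := card_distinct_triples (S \ {0, 1})
    rw [hR] at htriples
    refine Eq.trans (congrArg card ?_) htriples
    ext p
    rw [filter_filter, mem_filter_univ, mem_filter, mem_product, mem_product,
      ← nodup_sixPoints_and_toFinset_eq_iff hcard h₀ h₁ hsum, and_right_comm]
    exact and_iff_left_of_imp fun h => h.2 ▸ hsum'
  · intro p hp
    rw [mem_coe, mem_filter_univ] at hp
    rw [mem_coe, mem_blocks]
    refine ⟨⟨List.toFinset_card_of_nodup hp.1, sum_sixPoints_eq_zero hp.1, hp.2⟩, ?_, ?_⟩ <;>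
      simp [sixPoints]

end SixPointBlocks

section AffineInvariance

variable {F : Type*} [Field F] [CharP F 2] (σ : F →+* F)

theorem sum_const_eq_zero_of_even_card {S : Finset F} (hS : Even #S) (c : F) :
    ∑ _t ∈ S, c = 0 := by
  rw [sum_const, nsmul_eq_mul, CharTwo.natCast_eq_ite, if_pos hS, zero_mul]

theorem sum_affine_eq_zero {S : Finset F} (hS : Even #S) (hsum : ∑ t ∈ S, t = 0) (k x : F) :
    ∑ t ∈ S, (k * t + x) = 0 := by
  rw [sum_add_distrib, ← mul_sum, hsum, sum_const_eq_zero_of_even_card hS, mul_zero, add_zero]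

theorem sum_affine_mul_eq_zero {S : Finset F} (hS : Even #S) (hsum : ∑ t ∈ S, t = 0)
    (hsum' : ∑ t ∈ S, t * σ t = 0) (k x : F) :
    ∑ t ∈ S, (k * t + x) * σ (k * t + x) = 0 := by
  have hexpand (t : F) : (k * t + x) * σ (k * t + x) =
      k * σ k * (t * σ t) + k * σ x * t + x * σ k * σ t + x * σ x := by
    rw [map_add, map_mul]
    ring
  have hσsum : ∑ t ∈ S, σ t = 0 := by rw [← map_sum, hsum, map_zero]
  rw [sum_congr rfl fun t _ => hexpand t, sum_add_distrib, sum_add_distrib, sum_add_distrib,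
    ← mul_sum, ← mul_sum, ← mul_sum, sum_const_eq_zero_of_even_card hS, hsum, hsum', hσsum]
  simp only [mul_zero, add_zero]

variable [Fintype F] [DecidableEq F]

theorem image_affine_mem_blocks {S : Finset F} {a b k : F} (hk : k ≠ 0) (x : F)
    (hS : S ∈ blocks σ a b) :
    S.image (fun t => k * t + x) ∈ blocks σ (k * a + x) (k * b + x) := by
  have hinj : Function.Injective fun t => k * t + x :=
    (add_left_injective x).comp (mul_right_injective₀ hk)
  rw [mem_blocks] at hS ⊢
  obtain ⟨⟨hcard, hsum, hsum'⟩, ha, hb⟩ := hS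
  have heven : Even #S := hcard ▸ by decide
  rw [card_image_of_injective _ hinj, sum_image hinj.injOn, sum_image hinj.injOn]
  exact ⟨⟨hcard, sum_affine_eq_zero heven hsum k x, sum_affine_mul_eq_zero σ heven hsum hsum' k x⟩,
    mem_image_of_mem _ ha, mem_image_of_mem _ hb⟩

theorem card_blocks_le_card_blocks_affine {k : F} (hk : k ≠ 0) (a b x : F) :
    #(blocks σ a b) ≤ #(blocks σ (k * a + x) (k * b + x)) :=
  card_le_card_of_injOn _ (fun _ hS => image_affine_mem_blocks σ hk x hS) <|
    (image_injective ((add_left_injective x).comp (mul_right_injective₀ hk))).injOn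

theorem card_blocks_eq_card_blocks_zero_one {x y : F} (hxy : x ≠ y) :
    #(blocks σ x y) = #(blocks σ 0 1) := by
  have hk : x + y ≠ 0 := CharTwo.add_eq_zero.not.2 hxy
  have hle := card_blocks_le_card_blocks_affine σ (inv_ne_zero hk) x y ((x + y)⁻¹ * x)
  have hge := card_blocks_le_card_blocks_affine σ hk 0 1 x
  rw [CharTwo.add_self_eq_zero, ← mul_add, add_comm y, inv_mul_cancel₀ hk] at hle
  rw [mul_zero, zero_add, mul_one, add_right_comm, CharTwo.add_self_eq_zero, zero_add] at hge
  exact hle.antisymm hge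

theorem card_blocks {x y : F} (hxy : x ≠ y) :
    (24 * #(blocks σ x y) : ℤ) =
      Fintype.card F ^ 2 + #{t | σ (σ t) = t} * (#{t | σ t = t} - 1) * Fintype.card F -
        #{t | σ t = t} * (6 * Fintype.card F - 8) -
        8 * (#{t | σ t = t} - 2) * (Fintype.card F - 4) := by
  rw [card_blocks_eq_card_blocks_zero_one σ hxy, ← card_sixPoints_sum_mul_eq_zero σ,
    card_sixPoints_eq_card_blocks, Nat.cast_mul, mul_comm, Nat.cast_ofNat]

end AffineInvariance

section FrobeniusFixedPoints

theorem card_pow_pow_eq_self {F : Type*} [Field F] [Fintype F] [DecidableEq F] {q m : ℕ}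
    (hF : Fintype.card F = q ^ m) (k : ℕ) : #{x : F | x ^ q ^ k = x} = q ^ m.gcd k := by
  have hq : q ≠ 0 := by
    rintro rfl
    exact (pow_le_one₀ le_rfl zero_le_one).not_gt (hF ▸ Fintype.one_lt_card (α := F))
  have hunits : #{g : Fˣ | g ^ (q ^ k - 1) = 1} = q ^ m.gcd k - 1 := by
    rw [← Nat.pow_sub_one_gcd_pow_sub_one, ← hF, ← Nat.card_eq_fintype_card, ← Nat.card_units,
      ← IsCyclic.card_powMonoidHom_ker]
    exact (Nat.subtype_card _ fun g => by rw [mem_filter_univ]; rfl).symm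
  have hinsert : ({x | x ^ q ^ k = x} : Finset F) =
      insert 0 (({g | g ^ (q ^ k - 1) = 1} : Finset Fˣ).image Units.val) := by
    ext x
    rw [mem_filter_univ, ← pow_sub_one_mul (pow_ne_zero k hq), mul_left_eq_self₀, mem_insert,
      mem_image, or_comm]
    simp only [mem_filter_univ, Units.ext_iff, Units.val_pow_eq_pow_val, Units.val_one]
    refine or_congr_right' fun hx => ⟨fun h => ⟨Units.mk0 x hx, h, rfl⟩, ?_⟩
    rintro ⟨g, hg, rfl⟩
    exact hg
  rw [hinsert, card_insert_of_notMem (by simp), card_image_of_injective _ Units.val_injective,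
    hunits, Nat.sub_add_cancel (Nat.one_le_pow _ _ (pos_of_ne_zero hq))]

variable {F : Type*} [Field F] [Fintype F] [DecidableEq F] [CharP F 2] {m : ℕ}

theorem card_fixed_iterateFrobenius (hF : Fintype.card F = 2 ^ m) (e : ℕ) :
    #{t | iterateFrobenius F 2 e t = t} = 2 ^ m.gcd e :=
  card_pow_pow_eq_self hF e

theorem card_fixed_iterateFrobenius_sq (hF : Fintype.card F = 2 ^ m) (e : ℕ) :
    #{t | iterateFrobenius F 2 e (iterateFrobenius F 2 e t) = t} = 2 ^ m.gcd (2 * e) := by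
  simp only [← iterateFrobenius_add_apply, ← two_mul]
  exact card_fixed_iterateFrobenius hF (2 * e)

end FrobeniusFixedPoints

section MinimalPolynomials

theorem exists_eq_pow_card_pow_of_minpoly_eq {K L : Type*} [Field K] [Fintype K] [Field L]
    [Finite L] [Algebra K L] {x y : L} (h : minpoly K x = minpoly K y) :
    ∃ j < Module.finrank K L, x = y ^ Fintype.card K ^ j := by
  obtain ⟨φ, rfl⟩ := (Normal.minpoly_eq_iff_mem_orbit L).1 h
  obtain ⟨j, rfl⟩ := (FiniteField.bijective_frobeniusAlgEquivOfAlgebraic_pow K L).2 φ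
  refine ⟨j, j.2, ?_⟩
  change (FiniteField.frobeniusAlgEquivOfAlgebraic K L ^ (j : ℕ)) y = _
  rw [AlgEquiv.coe_pow, FiniteField.coe_frobeniusAlgEquivOfAlgebraic_iterate]

theorem two_pow_modEq_two_pow_mod (m e : ℕ) : 2 ^ e ≡ 2 ^ (e % m) [MOD 2 ^ m - 1] := by
  have h : 2 ^ m ≡ 1 [MOD 2 ^ m - 1] := Nat.modEq_sub Nat.one_le_two_pow
  conv_lhs => rw [← Nat.div_add_mod e m, pow_add, pow_mul]
  simpa using (h.pow (e / m)).mul_right (2 ^ (e % m))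

theorem not_one_add_two_pow_modEq_two_pow {m e j : ℕ} (hme : ¬m ∣ e) (hj : j < m) :
    ¬1 + 2 ^ e ≡ 2 ^ j [MOD 2 ^ m - 1] := by
  intro h
  have hr : e % m ≠ 0 := fun h => hme (Nat.dvd_of_mod_eq_zero h)
  have hrm : e % m < m := Nat.mod_lt e (by lia)
  have hcancel : 2 ^ (e % m) ≡ 2 ^ j - 1 [MOD 2 ^ m - 1] := by
    refine (two_pow_modEq_two_pow_mod m e).symm.trans (Nat.ModEq.add_left_cancel' 1 ?_)
    rwa [Nat.add_sub_cancel' Nat.one_le_two_pow]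
  have hdouble : 2 ^ m = 2 * 2 ^ (m - 1) := by rw [← pow_succ', Nat.sub_add_cancel (by lia)]
  have htwo : 2 ^ 1 ≤ 2 ^ (m - 1) := Nat.pow_le_pow_right two_pos (by lia)
  have hle_r : 2 ^ (e % m) ≤ 2 ^ (m - 1) := Nat.pow_le_pow_right two_pos (by lia)
  have hle_j : 2 ^ j ≤ 2 ^ (m - 1) := Nat.pow_le_pow_right two_pos (by lia)
  have heq := hcancel.eq_of_lt_of_lt (by lia) (by lia)
  have hlt_r : 1 < 2 ^ (e % m) := Nat.one_lt_two_pow hr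
  have heven_r : Even (2 ^ (e % m)) := even_two.pow_of_ne_zero hr
  have heven_j : Even (2 ^ j) := even_two.pow_of_ne_zero (by rintro rfl; lia)
  grind

theorem isCoprime_minpoly_pow_one_add_two_pow {L : Type*} [Field L] [Finite L]
    [Algebra (ZMod 2) L] {m e : ℕ} (hme : ¬m ∣ e) (hL : Module.finrank (ZMod 2) L = m) {α : L}
    (hα : orderOf α = 2 ^ m - 1) :
    IsCoprime (minpoly (ZMod 2) α) (minpoly (ZMod 2) (α ^ (1 + 2 ^ e))) := by
  have hirr (x : L) : Irreducible (minpoly (ZMod 2) x) :=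
    minpoly.irreducible (Algebra.IsIntegral.isIntegral x)
  refine ((hirr α).isCoprime_or_dvd _).resolve_right fun hdvd => ?_
  have heq : minpoly (ZMod 2) (α ^ (1 + 2 ^ e)) = minpoly (ZMod 2) α :=
    minpoly.eq_of_irreducible_of_monic (hirr _) ((minpoly.dvd_iff).1 hdvd)
      (minpoly.monic (Algebra.IsIntegral.isIntegral _))
  obtain ⟨j, hj, hconj⟩ := exists_eq_pow_card_pow_of_minpoly_eq heq
  rw [hL] at hj
  have hfin : IsOfFinOrder α :=
    orderOf_pos_iff.1 (hα ▸ Nat.sub_pos_of_lt (Nat.one_lt_two_pow (by lia)))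
  rw [ZMod.card, hfin.pow_eq_pow_iff_modEq, hα] at hconj
  exact not_one_add_two_pow_modEq_two_pow hme hj hconj

end MinimalPolynomials
section Locators

/-- The field elements labelling the support of a binary vector whose coordinates are indexed by
the elements of a field through `P`. -/
def locators {ι F : Type*} [Fintype ι] (P : ι ≃ F) (c : ι → ZMod 2) : Finset F :=
  ({i | c i ≠ 0} : Finset ι).map P.toEmbedding

/-- The label of a coordinate of the extended code: `α ^ i` for a coordinate of the cyclic code,
and `0` for the parity coordinate. -/
def coordinateLabel {F : Type*} [MonoidWithZero F] {n : ℕ} (α : F) (i : Fin n) : F :=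
  if (i : ℕ) < n - 1 then α ^ (i : ℕ) else 0

theorem coordinateLabel_bijective {F : Type*} [Field F] [Finite F] {n : ℕ} (hn : Nat.card F = n)
    {α : F} (hα : orderOf α = n - 1) : Function.Bijective (coordinateLabel α : Fin n → F) := by
  have hcard : 1 < n := hn ▸ Finite.one_lt_card
  have hα₀ : α ≠ 0 := by
    rintro rfl
    rw [orderOf_zero] at hα
    lia
  refine (Nat.bijective_iff_injective_and_card _).2
    ⟨fun i j hij => Fin.ext ?_, by rw [hn, Nat.card_fin]⟩
  simp only [coordinateLabel] at hij
  split_ifs at hij with hi hj hj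
  · exact pow_injOn_Iio_orderOf (hα ▸ hi) (hα ▸ hj) hij
  · exact absurd hij (pow_ne_zero _ hα₀)
  · exact absurd hij.symm (pow_ne_zero _ hα₀)
  · lia

variable {ι F : Type*} [Fintype ι] (P : ι ≃ F) (c : ι → ZMod 2)

theorem apply_mem_locators (i : ι) : P i ∈ locators P c ↔ c i ≠ 0 := by
  simp [locators]

theorem card_locators : #(locators P c) = hammingNorm c :=
  card_map _

theorem sum_locators {R : Type*} [Semiring R] [Algebra (ZMod 2) R] (f : F → R) :
    ∑ x ∈ locators P c, f x = ∑ i, algebraMap (ZMod 2) R (c i) * f (P i) := by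
  rw [locators, sum_map, sum_filter]
  refine sum_congr rfl fun i _ => ?_
  split_ifs with hi
  · rw [show c i = 1 from Fin.eq_one_of_ne_zero _ hi, map_one, one_mul]
    rfl
  · rw [not_not.1 hi, map_zero, zero_mul]

theorem locators_bijective : Function.Bijective (locators P) := by
  classical
  refine ⟨fun c c' h => funext fun i => ?_, fun S => ⟨fun i => if P i ∈ S then 1 else 0, ?_⟩⟩
  · have hi := (apply_mem_locators P c i).symm.trans (h ▸ apply_mem_locators P c' i)
    generalize c i = a at hi
    generalize c' i = b at hi
    revert a b
    decide
  · ext x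
    obtain ⟨i, rfl⟩ := P.surjective x
    simp [apply_mem_locators]

theorem sum_eq_zero_iff_even_card_locators : ∑ i, c i = 0 ↔ Even #(locators P c) := by
  rw [← ZMod.natCast_eq_zero_iff_even, card_eq_sum_ones, Nat.cast_sum, sum_locators]
  simp

end Locators

section ExtendedCode

theorem aeval_codePoly {A : Type*} [CommSemiring A] [Algebra (ZMod 2) A] {n : ℕ}
    (c : Fin n → ZMod 2) (β : A) :
    aeval β (codePoly c) = ∑ i, algebraMap (ZMod 2) A (c i) * β ^ (i : ℕ) := by
  simp only [codePoly, map_sum, map_mul, aeval_C, map_pow, aeval_X]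

variable {m e : ℕ} {α : GaloisField 2 m}

theorem mem_CE_iff (hm : m ≠ 0) (hme : ¬m ∣ e) (hα : orderOf α = 2 ^ m - 1)
    (c : Fin (2 ^ m - 1) → ZMod 2) :
    c ∈ CE m e α ↔ aeval α (codePoly c) = 0 ∧ aeval (α ^ (1 + 2 ^ e)) (codePoly c) = 0 := by
  have hcop := isCoprime_minpoly_pow_one_add_two_pow hme (GaloisField.finrank 2 hm) hα
  rw [← minpoly.dvd_iff, ← minpoly.dvd_iff]
  exact ⟨fun h => ⟨dvd_of_mul_right_dvd h, dvd_of_mul_left_dvd h⟩, fun h => hcop.mul_dvd h.1 h.2⟩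

theorem aeval_codePoly_eq_sum_locators {F : Type*} [Field F] [Algebra (ZMod 2) F] {n k : ℕ}
    (hk : k ≠ 0) {α : F} (P : Fin n ≃ F) (hP : ∀ i, P i = coordinateLabel α i)
    (c : Fin n → ZMod 2) :
    aeval (α ^ k) (codePoly fun i : Fin (n - 1) => c (Fin.castLE (Nat.sub_le _ _) i)) =
      ∑ x ∈ locators P c, x ^ k := by
  rw [aeval_codePoly, sum_locators]
  refine Fintype.sum_of_injective _ (Fin.castLE_injective (Nat.sub_le n 1)) _ _ ?_ ?_
  · intro i hi
    have hlast : ¬(i : ℕ) < n - 1 := fun h => hi ⟨⟨i, h⟩, rfl⟩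
    rw [hP, coordinateLabel, if_neg hlast, zero_pow hk, mul_zero]
  · intro i
    rw [hP, coordinateLabel, Fin.val_castLE, if_pos i.2, ← pow_mul, ← pow_mul, mul_comm k]

theorem mem_CEbar_iff (hm : m ≠ 0) (hme : ¬m ∣ e) (hα : orderOf α = 2 ^ m - 1)
    (P : Fin (2 ^ m) ≃ GaloisField 2 m) (hP : ∀ i, P i = coordinateLabel α i)
    (c : Fin (2 ^ m) → ZMod 2) :
    c ∈ CEbar m e α ↔ (∑ x ∈ locators P c, x = 0 ∧ ∑ x ∈ locators P c, x ^ (1 + 2 ^ e) = 0) ∧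
      Even #(locators P c) := by
  have haeval {k : ℕ} (hk : k ≠ 0) := aeval_codePoly_eq_sum_locators hk P hP c
  rw [← haeval (by lia), ← sum_eq_zero_iff_even_card_locators]
  have h1 := haeval one_ne_zero
  simp only [pow_one] at h1
  rw [← h1, ← mem_CE_iff hm hme hα]
  rfl

theorem ncard_weight_six_codewords_eq_card_blocks [Fintype (GaloisField 2 m)]
    [DecidableEq (GaloisField 2 m)] (hm : m ≠ 0) (hme : ¬m ∣ e) (hα : orderOf α = 2 ^ m - 1)
    (P : Fin (2 ^ m) ≃ GaloisField 2 m) (hP : ∀ i, P i = coordinateLabel α i) (i j : Fin (2 ^ m)) :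
    {c | c ∈ CEbar m e α ∧ hammingNorm c = 6 ∧ ∀ k ∈ ({i, j} : Finset _), c k ≠ 0}.ncard =
      #(blocks (iterateFrobenius (GaloisField 2 m) 2 e) (P i) (P j)) := by
  rw [← Set.ncard_coe_finset, ← Set.ncard_preimage_of_injective_subset_range
    (locators_bijective P).injective (by simp [(locators_bijective P).surjective.range_eq])]
  congr 1
  ext c
  have heven : #(locators P c) = 6 → Even #(locators P c) := fun h => h ▸ by decide
  simp only [Set.mem_ofPred_eq, Set.mem_preimage, mem_coe, mem_blocks,
    mem_CEbar_iff hm hme hα P hP, ← card_locators P c, apply_mem_locators, mem_insert,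
    mem_singleton, forall_eq_or_imp, forall_eq, iterateFrobenius_def, pow_add, pow_one]
  tauto

end ExtendedCode

theorem design_weight_six_general (m e : ℕ) (hme : ¬m ∣ e) (α : GaloisField 2 m)
    (hα : orderOf α = 2 ^ m - 1) :
    ∀ T : Finset (Fin (2 ^ m)), T.card = 2 →
      (24 * {c : Fin (2 ^ m) → ZMod 2 |
        c ∈ CEbar m e α ∧ hammingNorm c = 6 ∧ ∀ i ∈ T, c i ≠ 0}.ncard : ℤ) =
      (2 ^ m) ^ 2 + 2 ^ m.gcd (2 * e) * (2 ^ m.gcd e - 1) * 2 ^ m -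
        2 ^ m.gcd e * (6 * 2 ^ m - 8) - 8 * (2 ^ m.gcd e - 2) * (2 ^ m - 4) := by
  classical
  intro T hT
  obtain ⟨i, j, hij, rfl⟩ := card_eq_two.1 hT
  have hm : m ≠ 0 := by
    rintro rfl
    exact hij (Subsingleton.elim (α := Fin 1) i j)
  let _ : Fintype (GaloisField 2 m) := Fintype.ofFinite _
  have hcard := GaloisField.card 2 m hm
  have hF : Fintype.card (GaloisField 2 m) = 2 ^ m := by rw [← Nat.card_eq_fintype_card, hcard]
  let P := Equiv.ofBijective _ (coordinateLabel_bijective hcard hα)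
  rw [ncard_weight_six_codewords_eq_card_blocks hm hme hα P (fun _ => rfl) i j,
    card_blocks _ (P.injective.ne hij), card_fixed_iterateFrobenius hF,
    card_fixed_iterateFrobenius_sq hF, hF]
  push_cast
  rfl

/-- For `m ≡ 0 (mod 4)` (with `m ≥ 4`) and `2 ≤ e ≤ ⌊m/2⌋` with
`gcd(m,e) = 2`, the supports of the weight-6 codewords of `C̄_E` form a
`2-(2^m, 6, λ)` design with `λ = (2^{2m−3} + 2^m + 12)/3`: every 2-element subset of the
coordinate positions lies in the support of exactly `λ` weight-6 codewords. -/
theorem design_weight_six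
    (m e : ℕ) (hm4 : m % 4 = 0) (hm : 4 ≤ m)
    (he2 : 2 ≤ e) (heM : 2 * e ≤ m) (hgcd : Nat.gcd m e = 2)
    (α : GaloisField 2 m) (hα : orderOf α = 2 ^ m - 1) :
    ∀ T : Finset (Fin (2 ^ m)), T.card = 2 →
      3 * {c : Fin (2 ^ m) → ZMod 2 |
        c ∈ CEbar m e α ∧ hammingNorm c = 6 ∧ ∀ i ∈ T, c i ≠ 0}.ncard =
      2 ^ (2 * m - 3) + 2 ^ m + 12 := by
  intro T hT
  have hme : ¬m ∣ e := fun h => by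
    rw [Nat.gcd_eq_left h] at hgcd
    lia
  have hgcd' : m.gcd (2 * e) = 4 := by
    refine Nat.dvd_antisymm ?_ (Nat.dvd_gcd (Nat.dvd_of_mod_eq_zero hm4) ?_)
    · simpa only [Nat.gcd_mul_left, hgcd] using Nat.gcd_dvd_gcd_mul_left_left m (2 * e) 2
    · exact mul_dvd_mul_left 2 (hgcd ▸ Nat.gcd_dvd_right m e)
  have hgeneral := design_weight_six_general m e hme α hα T hT
  rw [hgcd, hgcd', ← pow_mul, mul_comm m, ← Nat.sub_add_cancel (by lia : 3 ≤ 2 * m),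
    pow_add] at hgeneral
  lia
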